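/- Let r > 0. For any sequence (ε_k) of positive reals with ε_k → 0 and any sequence (N_k) of natural numbers with 0 ≤ N_k - r/(2 ε_k) < 1 for all k, one has lim_{k→∞} e^{r/ε_k} · √(ε_k/r) · ε_k^{2 N_k} (2 N_k)! / r^{2 N_k} = √(2π). That is, for the rationally approximated problem the optimally truncated term ε^{2N}(2N)!/r^{2N+1} is asymptotic to √(2π/(rε)) · e^{-r/ε} as ε → 0. -/

import Mathlib

open Filter

/-!
Put `x = r / ε` and `m = 2 N`, so that the quantity is `eˣ m! / (√x xᵐ)`. Stirling's formula for
`m!` turns it into `√(2π) · √(m / x) · exp (x φ(m / x))` up to a factor tending to `1`, where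
`φ u = u log u + 1 - u` is `klFun`. Since `0 ≤ φ u ≤ (u - 1)²`, the exponent lies between `0` and
`(m - x)² / x`, so the limit is `√(2π)` as soon as `m - x = o(√x)`.
-/

open Real Topology Nat InformationTheory

lemma klFun_le_sub_one_sq {u : ℝ} (hu : 0 ≤ u) : klFun u ≤ (u - 1) ^ 2 := by
  have mul_log_le : u * log u ≤ u * (u - 1) := by
    rcases hu.eq_or_lt with rfl | hu_pos
    · simp
    · exact mul_le_mul_of_nonneg_left (log_le_sub_one_of_pos hu_pos) hu
  rw [klFun_apply]
  linarith

lemma mul_klFun_div_le_sub_sq_div {x y : ℝ} (hx : 0 < x) (hy : 0 ≤ y) :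
    x * klFun (y / x) ≤ (y - x) ^ 2 / x :=
  calc x * klFun (y / x) ≤ x * (y / x - 1) ^ 2 := by
        gcongr
        exact klFun_le_sub_one_sq (by positivity)
    _ = (y - x) ^ 2 / x := by field_simp

lemma exp_mul_klFun_natCast_div {x : ℝ} (hx : 0 < x) (m : ℕ) :
    exp (x * klFun (m / x)) = exp x * (m / x) ^ m / exp 1 ^ m := by
  rcases Nat.eq_zero_or_pos m with rfl | hm
  · simp [klFun_zero]
  have exponent_eq : x * klFun (m / x) = x + m * log (m / x) - m * 1 := by
    rw [klFun_apply]
    field_simp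
    ring
  rw [exponent_eq, exp_sub, exp_add, exp_nat_mul, exp_nat_mul, exp_log (by positivity)]

lemma exp_mul_sqrt_inv_mul_factorial_div_pow {x : ℝ} (hx : 0 < x) {m : ℕ} (hm : m ≠ 0) :
    exp x * √x⁻¹ * (m ! / x ^ m) =
      √2 * √(m / x) * exp (x * klFun (m / x)) * Stirling.stirlingSeq m := by
  rw [exp_mul_klFun_natCast_div hx, Stirling.stirlingSeq, sqrt_mul zero_le_two,
    sqrt_div m.cast_nonneg, sqrt_inv, div_pow, div_pow]
  field_simp

section Limits

variable {α : Type*} {l : Filter α} {x : α → ℝ}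

lemma tendsto_mul_klFun_div_zero {y : α → ℝ} (hx : ∀ᶠ i in l, 0 < x i) (hy : ∀ᶠ i in l, 0 ≤ y i)
    (hyx : Tendsto (fun i => (y i - x i) ^ 2 / x i) l (𝓝 0)) :
    Tendsto (fun i => x i * klFun (y i / x i)) l (𝓝 0) := by
  refine squeeze_zero' ?_ ?_ hyx <;> filter_upwards [hx, hy] with i hxi hyi
  · exact mul_nonneg hxi.le (klFun_nonneg (by positivity))
  · exact mul_klFun_div_le_sub_sq_div hxi hyi

lemma tendsto_div_one_of_tendsto_sub_sq_div {y : α → ℝ} (hx : Tendsto x l atTop)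
    (hyx : Tendsto (fun i => (y i - x i) ^ 2 / x i) l (𝓝 0)) :
    Tendsto (fun i => y i / x i) l (𝓝 1) := by
  have sq_tendsto : Tendsto (fun i => (y i / x i - 1) ^ 2) l (𝓝 0) := by
    refine (hyx.div_atTop hx).congr' ?_
    filter_upwards [hx.eventually_gt_atTop 0] with i hxi
    field_simp
  have sub_tendsto : Tendsto (fun i => y i / x i - 1) l (𝓝 0) := by
    rw [tendsto_zero_iff_abs_tendsto_zero]
    simpa [Function.comp_def, sqrt_sq_eq_abs] using sq_tendsto.sqrt
  simpa using sub_tendsto.add_const 1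

lemma tendsto_mul_sq_zero_of_abs_le {δ t : α → ℝ} {C : ℝ} (hδ : Tendsto δ l (𝓝 0))
    (ht : ∀ i, |t i| ≤ C) : Tendsto (fun i => δ i * t i ^ 2) l (𝓝 0) := by
  refine hδ.zero_mul_isBoundedUnder_le (isBoundedUnder_of ⟨C ^ 2, fun i => ?_⟩)
  rw [Function.comp_apply, norm_pow]
  exact pow_le_pow_left₀ (norm_nonneg _) (ht i) 2

theorem tendsto_exp_mul_sqrt_inv_mul_factorial_div_pow {m : α → ℕ} (hx : Tendsto x l atTop)
    (hmx : Tendsto (fun i => ((m i : ℝ) - x i) ^ 2 / x i) l (𝓝 0)) :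
    Tendsto (fun i => exp (x i) * √(x i)⁻¹ * ((m i)! / x i ^ m i)) l (𝓝 √(2 * π)) := by
  have hx_pos : ∀ᶠ i in l, 0 < x i := hx.eventually_gt_atTop 0
  have ratio_tendsto : Tendsto (fun i => m i / x i) l (𝓝 1) :=
    tendsto_div_one_of_tendsto_sub_sq_div hx hmx
  have hm : Tendsto m l atTop := by
    rw [← tendsto_natCast_atTop_iff (R := ℝ)]
    refine (ratio_tendsto.pos_mul_atTop one_pos hx).congr' ?_
    filter_upwards [hx_pos] with i hxi using div_mul_cancel₀ _ hxi.ne'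
  have exp_tendsto : Tendsto (fun i => exp (x i * klFun (m i / x i))) l (𝓝 (exp 0)) :=
    (tendsto_mul_klFun_div_zero hx_pos (.of_forall fun i => (m i).cast_nonneg) hmx).rexp
  have product_tendsto := ((ratio_tendsto.sqrt.const_mul √2).mul exp_tendsto).mul
    (Stirling.tendsto_stirlingSeq_sqrt_pi.comp hm)
  have limit_eq : √2 * √1 * exp 0 * √π = √(2 * π) := by simp
  rw [limit_eq] at product_tendsto
  refine product_tendsto.congr' ?_
  filter_upwards [hx_pos, hm.eventually_ne_atTop 0] with i hxi hmi
  exact (exp_mul_sqrt_inv_mul_factorial_div_pow hxi hmi).symm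

theorem aaa_optimally_truncated_term_general {r : ℝ} (hr : 0 < r) {ε : α → ℝ}
    (hε : Tendsto ε l (𝓝[>] 0)) {N : α → ℕ}
    (hN : Tendsto (fun i => ε i * ((N i : ℝ) - r / (2 * ε i)) ^ 2) l (𝓝 0)) :
    Tendsto (fun i => exp (r / ε i) * √(ε i / r) *
      (ε i ^ (2 * N i) * (2 * N i)! / r ^ (2 * N i))) l (𝓝 √(2 * π)) := by
  have hε_pos : ∀ᶠ i in l, 0 < ε i := hε.eventually self_mem_nhdsWithin
  have div_tendsto : Tendsto (fun i => r / ε i) l atTop :=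
    hε.inv_tendsto_nhdsGT_zero.const_mul_atTop hr
  have offset_tendsto :
      Tendsto (fun i => (((2 * N i : ℕ) : ℝ) - r / ε i) ^ 2 / (r / ε i)) l (𝓝 0) := by
    rw [← mul_zero (4 / r)]
    refine (hN.const_mul (4 / r)).congr' ?_
    filter_upwards [hε_pos] with i hεi
    push_cast
    field_simp
    ring
  refine (tendsto_exp_mul_sqrt_inv_mul_factorial_div_pow div_tendsto offset_tendsto).congr' ?_
  filter_upwards [hε_pos] with i hεi
  rw [inv_div, div_pow]
  field_simp

end Limits

/-- For the rationally approximated (simple-pole) problem, at the optimal truncation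
point `N = r/(2ε) + ω`, `ω ∈ [0,1)`, the optimally truncated term
`ε^{2N}(2N)!/r^{2N+1}` is asymptotic to `√(2π/(rε)) e^{-r/ε}` as `ε → 0`:
`e^{r/ε} √(ε/r) ε^{2N}(2N)!/r^{2N} → √(2π)`. -/
theorem aaa_optimally_truncated_term (r : ℝ) (hr : 0 < r)
    (ε : ℕ → ℝ) (hε : ∀ k, 0 < ε k) (hε0 : Tendsto ε atTop (nhds 0))
    (N : ℕ → ℕ)
    (hN : ∀ k, 0 ≤ (N k : ℝ) - r / (2 * ε k) ∧ (N k : ℝ) - r / (2 * ε k) < 1) :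
    Tendsto (fun k =>
      Real.exp (r / ε k) * Real.sqrt (ε k / r) *
        ((ε k) ^ (2 * N k) * (Nat.factorial (2 * N k) : ℝ) / r ^ (2 * N k)))
      atTop (nhds (Real.sqrt (2 * Real.pi))) := by
  exact aaa_optimally_truncated_term_general hr (tendsto_nhdsWithin_iff.2 ⟨hε0, .of_forall hε⟩)
    (tendsto_mul_sq_zero_of_abs_le hε0 fun k => abs_le.2 ⟨by linarith [(hN k).1], (hN k).2.le⟩)
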